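/- For every n ≥ 1 there is a planar graph G_n with 3n vertices, 7n − 6 triangles, and no K₄ subgraph, such that every strong ω-decomposition of G_n with width 4 has order at least (7/6)|V(G_n)| − 3. -/

import Mathlib

open SimpleGraph

universe u

/-- `H` is a minor of `G`: there are pairwise disjoint nonempty connected branch sets
in `G`, one for each vertex of `H`, with an edge of `G` between the branch sets of any
two adjacent vertices of `H`. -/
def IsMinor {α β : Type*} (H : SimpleGraph α) (G : SimpleGraph β) : Prop :=
  ∃ f : α → Set β,
    (∀ a, (f a).Nonempty) ∧
    (∀ a, (G.induce (f a)).Connected) ∧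
    (Pairwise fun a b => Disjoint (f a) (f b)) ∧
    ∀ a b, H.Adj a b → ∃ u ∈ f a, ∃ v ∈ f b, G.Adj u v

/-- A graph is planar iff it has no `K₅` minor and no `K₃,₃` minor (Wagner's theorem). -/
def Planar {β : Type*} (G : SimpleGraph β) : Prop :=
  ¬ IsMinor (⊤ : SimpleGraph (Fin 5)) G ∧
  ¬ IsMinor (completeBipartiteGraph (Fin 3) (Fin 3)) G

/-- `D` (a graph on index type `ι`, with bags `X i ⊆ V(G)`) is a decomposition of `G`:
every vertex lies in some bag, the bags containing any fixed vertex induce a connected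
subgraph of `D`, and for every edge `vw` of `G` the subgraphs `D(v)` and `D(w)` touch
(share a bag, or a bag containing `v` is adjacent in `D` to a bag containing `w`). -/
structure IsDecomposition {V ι : Type*} (G : SimpleGraph V) (D : SimpleGraph ι)
    (X : ι → Finset V) : Prop where
  nonempty : ∀ v : V, ∃ i, v ∈ X i
  connected : ∀ v : V, (D.induce {i : ι | v ∈ X i}).Connected
  touch : ∀ ⦃v w : V⦄, G.Adj v w →
    (∃ i, v ∈ X i ∧ w ∈ X i) ∨ (∃ i j, D.Adj i j ∧ v ∈ X i ∧ w ∈ X j)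

/-- A strong decomposition: additionally, for every edge `vw` of `G` some bag contains
both `v` and `w`. -/
structure IsStrongDecomposition {V ι : Type*} (G : SimpleGraph V) (D : SimpleGraph ι)
    (X : ι → Finset V) : Prop where
  nonempty : ∀ v : V, ∃ i, v ∈ X i
  connected : ∀ v : V, (D.induce {i : ι | v ∈ X i}).Connected
  intersect : ∀ ⦃v w : V⦄, G.Adj v w → ∃ i, v ∈ X i ∧ w ∈ X i

/-!
`Gₙ` consists of `n` nested triangles, properly 3-coloured, where vertices of different colours are
adjacent if their levels differ by at most one. Hence a triangle is a choice of a level for each of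
the three colours, any two levels differing by at most one: there are `7(n - 1) + 1` of them. As
there is no `K₄`, a bag of four vertices contains at most two of them, so at least `(7n - 6) / 2`
bags are needed to cover the triangles.

For planarity, cut along one of the nested triangles. Neither `K₅` nor `K₃,₃` has two disjoint pairs
of vertices without an edge between them, so for one side of the cut at most one branch set of a
minor model misses that side, and contracting the other side to a single vertex stacked on the
triangle preserves the minor. This reduces the claim to the octahedron with a cap stacked on each
of two opposite faces. A cap has a clique as its neighbourhood, so it either forms a branch set by
itself or can be dropped. If no cap is used, counting the six remaining vertices yields so many
singleton branch sets that three colours do not suffice for them. A cap is not a branch set of `K₅`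
because it has degree three. If it is a branch set of `K₃,₃`, the three vertices below it lie in the
three branch sets of the opposite side, and the other two branch sets of its own side compete for
the vertices of the remaining triangle, needing four of them.
-/

section Connectivity

variable {V W : Type*} {G : SimpleGraph V} {G' : SimpleGraph W} {s : Set V}

lemma induce_connected_iff_exists_adj :
    (G.induce s).Connected ↔ s.Nonempty ∧
      ∀ t ⊆ s, t.Nonempty → (s \ t).Nonempty → ∃ u ∈ t, ∃ v ∈ s \ t, G.Adj u v := by
  constructor
  · refine fun h => ⟨Set.nonempty_coe_sort.mp h.nonempty, ?_⟩
    rintro t hts ⟨u, hu⟩ ⟨v, hv, hvt⟩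
    obtain ⟨p⟩ := h.preconnected ⟨u, hts hu⟩ ⟨v, hv⟩
    obtain ⟨d, -, hd, hd'⟩ := p.exists_boundary_dart (Subtype.val ⁻¹' t) hu hvt
    exact ⟨_, hd, _, ⟨d.snd.2, hd'⟩, d.adj⟩
  · rintro ⟨hs, hcut⟩
    have := hs.to_subtype
    refine Connected.mk fun u v => ?_
    by_contra huv
    obtain ⟨w, ⟨hw, huw⟩, x, ⟨hx, hux⟩, hwx⟩ :=
      hcut {w | ∃ hw : w ∈ s, (G.induce s).Reachable u ⟨w, hw⟩} (fun _ h => h.1)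
        ⟨u, u.2, .rfl⟩ ⟨v, v.2, fun h => huv h.2⟩
    have hwx' : (G.induce s).Adj ⟨w, hw⟩ ⟨x, hx⟩ := hwx
    exact hux ⟨hx, huw.trans hwx'.reachable⟩

lemma induce_image_connected (φ : G →g G') (hs : (G.induce s).Connected) :
    (G'.induce (φ '' s)).Connected :=
  hs.map (induceHom φ (Set.mapsTo_image φ s)) fun ⟨_, v, hv, hvw⟩ => ⟨⟨v, hv⟩, Subtype.ext hvw⟩

lemma induce_preimage_connected (φ : G ↪g G') {t : Set W}
    (ht : (G'.induce (t ∩ Set.range φ)).Connected) : (G.induce (φ ⁻¹' t)).Connected := by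
  rw [induce_connected_iff_exists_adj] at ht ⊢
  obtain ⟨⟨_, hv, v, rfl⟩, hcut⟩ := ht
  refine ⟨⟨v, hv⟩, fun r hr hne ⟨w, hw, hwr⟩ => ?_⟩
  obtain ⟨_, ⟨x, hx, rfl⟩, _, ⟨⟨hy, y, rfl⟩, hyr⟩, hxy⟩ := hcut (φ '' r)
    (by rintro _ ⟨x, hx, rfl⟩; exact ⟨hr hx, x, rfl⟩) (hne.image φ)
    ⟨φ w, ⟨hw, w, rfl⟩, fun ⟨x, hx, h⟩ => hwr (φ.injective h ▸ hx)⟩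
  exact ⟨x, hx, y, ⟨hy, fun h => hyr ⟨y, h, rfl⟩⟩, φ.map_adj_iff.mp hxy⟩

end Connectivity

/-- A minor model of `H` in `G`: the branch sets `f a` witness that `H` is a minor of `G`. -/
structure IsMinorModel {α V : Type*} (H : SimpleGraph α) (G : SimpleGraph V)
    (f : α → Set V) : Prop where
  connected : ∀ a, (G.induce (f a)).Connected
  disjoint : Pairwise fun a b => Disjoint (f a) (f b)
  adj : ∀ ⦃a b⦄, H.Adj a b → ∃ u ∈ f a, ∃ v ∈ f b, G.Adj u v

namespace IsMinorModel

variable {α β V W : Type*} {H : SimpleGraph α} {K : SimpleGraph β} {G : SimpleGraph V}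
  {G' : SimpleGraph W} {f : α → Set V}

lemma nonempty (hf : IsMinorModel H G f) (a : α) : (f a).Nonempty :=
  Set.nonempty_coe_sort.mp (hf.connected a).nonempty

lemma isMinor (hf : IsMinorModel H G f) : IsMinor H G :=
  ⟨f, hf.nonempty, hf.connected, hf.disjoint, hf.adj⟩

lemma eq_of_mem (hf : IsMinorModel H G f) {v : V} {a b : α} (ha : v ∈ f a) (hb : v ∈ f b) :
    a = b := by
  by_contra hab
  exact Set.disjoint_left.mp (hf.disjoint hab) ha hb

lemma comp (hf : IsMinorModel H G f) (φ : K →g H) (hφ : Function.Injective φ) :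
    IsMinorModel K G (f ∘ φ) where
  connected b := hf.connected (φ b)
  disjoint _ _ hab := hf.disjoint (hφ.ne hab)
  adj _ _ hab := hf.adj (φ.map_adj hab)

lemma map (hf : IsMinorModel H G f) (φ : G →g G') (hφ : Function.Injective φ) :
    IsMinorModel H G' (fun a => φ '' f a) where
  connected a := induce_image_connected φ (hf.connected a)
  disjoint _ _ hab := (Set.disjoint_image_iff hφ).mpr (hf.disjoint hab)
  adj a b hab := by
    obtain ⟨u, hu, v, hv, huv⟩ := hf.adj hab
    exact ⟨φ u, Set.mem_image_of_mem φ hu, φ v, Set.mem_image_of_mem φ hv, φ.map_adj huv⟩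

lemma exists_injective_neighborSet (hf : IsMinorModel H G f) {a : α} {v : V} (ha : f a = {v}) :
    ∃ g : H.neighborSet a → G.neighborSet v,
      Function.Injective g ∧ ∀ b : H.neighborSet a, (g b : V) ∈ f b := by
  have key : ∀ b : H.neighborSet a, ∃ w : G.neighborSet v, (w : V) ∈ f b := fun b => by
    obtain ⟨u, hu, w, hw, huw⟩ := hf.adj b.2
    rw [ha, Set.mem_singleton_iff] at hu
    exact ⟨⟨w, hu ▸ huw⟩, hw⟩
  choose g hg using key
  exact ⟨g, fun b c hbc => Subtype.ext (hf.eq_of_mem (hg b) (hbc ▸ hg c)), hg⟩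

lemma two_mul_card_le [Fintype α] (hf : IsMinorModel H G f) {A : Set V} (hA : A.Finite)
    (hfA : ∀ a, f a ⊆ A) : 2 * Fintype.card α ≤ A.ncard + {a | (f a).ncard = 1}.ncard := by
  classical
  have hfin : ∀ a, (f a).Finite := fun a => hA.subset (hfA a)
  have hsum : ∑ a, (f a).ncard ≤ A.ncard := by
    rw [← finsum_eq_sum_of_fintype, ← Set.ncard_iUnion_of_finite hfin hf.disjoint]
    exact Set.ncard_le_ncard (Set.iUnion_subset hfA) hA
  have hterm : ∀ a, 2 ≤ (f a).ncard + if (f a).ncard = 1 then 1 else 0 := fun a => by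
    have := (Set.ncard_pos (hfin a)).mpr (hf.nonempty a)
    split_ifs <;> omega
  calc 2 * Fintype.card α = ∑ _a : α, 2 := by simp [mul_comm]
    _ ≤ ∑ a, ((f a).ncard + if (f a).ncard = 1 then 1 else 0) :=
      Finset.sum_le_sum fun a _ => hterm a
    _ = ∑ a, (f a).ncard + {a | (f a).ncard = 1}.ncard := by
      rw [Finset.sum_add_distrib, ← Finset.card_filter, ← Set.ncard_coe_finset,
        Finset.coe_filter_univ]
    _ ≤ A.ncard + {a | (f a).ncard = 1}.ncard := by gcongr

end IsMinorModel

lemma isMinor_iff_exists_isMinorModel {α V : Type*} {H : SimpleGraph α} {G : SimpleGraph V} :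
    IsMinor H G ↔ ∃ f, IsMinorModel H G f :=
  ⟨fun ⟨f, _, hconn, hdisj, hadj⟩ => ⟨f, hconn, hdisj, hadj⟩, fun ⟨_, hf⟩ => hf.isMinor⟩

lemma IsMinor.map {α V W : Type*} {H : SimpleGraph α} {G : SimpleGraph V} {G' : SimpleGraph W}
    (h : IsMinor H G) (φ : G →g G') (hφ : Function.Injective φ) : IsMinor H G' := by
  obtain ⟨f, hf⟩ := isMinor_iff_exists_isMinorModel.mp h
  exact (hf.map φ hφ).isMinor

/-- A separation `(A, B)` of `G` (no edge leads from `A \ B` to `B \ A`) along a clique. -/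
structure IsCliqueSeparation {V : Type*} (G : SimpleGraph V) (A B : Set V) : Prop where
  cover : ∀ v, v ∈ A ∨ v ∈ B
  adj : ∀ ⦃u v⦄, G.Adj u v → u ∈ A ∧ v ∈ A ∨ u ∈ B ∧ v ∈ B
  isClique : G.IsClique (A ∩ B)

namespace IsCliqueSeparation

variable {V : Type*} {G : SimpleGraph V} {A B s t : Set V}

lemma symm (h : IsCliqueSeparation G A B) : IsCliqueSeparation G B A where
  cover v := (h.cover v).symm
  adj _ _ huv := (h.adj huv).symm
  isClique := Set.inter_comm A B ▸ h.isClique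

lemma of_isClique_neighborSet {v : V} (hv : G.IsClique (G.neighborSet v)) :
    IsCliqueSeparation G {v}ᶜ (insert v (G.neighborSet v)) where
  cover u := by by_cases h : u = v <;> simp [h]
  adj u w huw := by
    by_cases hu : u = v
    · subst hu; simp [huw]
    · by_cases hw : w = v
      · subst hw; simp [huw.symm]
      · exact .inl ⟨hu, hw⟩
  isClique := hv.subset fun _ ⟨hu, hu'⟩ => hu'.resolve_left hu

lemma induce_inter_connected (h : IsCliqueSeparation G A B) (hs : (G.induce s).Connected)
    (hsA : (s ∩ A).Nonempty) : (G.induce (s ∩ A)).Connected := by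
  rw [induce_connected_iff_exists_adj] at hs ⊢
  have cross : ∀ t ⊆ s ∩ A, t.Nonempty → ((s ∩ A) \ t).Nonempty → Disjoint t B →
      ∃ u ∈ t, ∃ v ∈ (s ∩ A) \ t, G.Adj u v := by
    rintro t ht hne ⟨w, hw, hwt⟩ htB
    obtain ⟨u, hu, v, ⟨hv, hvt⟩, huv⟩ := hs.2 t (fun _ hx => (ht hx).1) hne ⟨w, hw.1, hwt⟩
    have hvA : v ∈ A := ((h.adj huv).resolve_right fun huB =>
      Set.disjoint_left.mp htB hu huB.1).2
    exact ⟨u, hu, v, ⟨⟨hv, hvA⟩, hvt⟩, huv⟩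
  refine ⟨hsA, fun t ht hne hne' => ?_⟩
  by_cases htB : Disjoint t B
  · exact cross t ht hne hne' htB
  by_cases htB' : Disjoint ((s ∩ A) \ t) B
  · have hdiff : (s ∩ A) \ ((s ∩ A) \ t) = t := Set.sdiff_sdiff_cancel_left ht
    obtain ⟨u, hu, v, hv, huv⟩ := cross _ Set.sdiff_subset hne' (by rwa [hdiff]) htB'
    exact ⟨v, hdiff ▸ hv, u, hu, huv.symm⟩
  obtain ⟨u, hu, huB⟩ := Set.not_disjoint_iff.mp htB
  obtain ⟨v, hv, hvB⟩ := Set.not_disjoint_iff.mp htB'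
  exact ⟨u, hu, v, hv, h.isClique ⟨(ht hu).2, huB⟩ ⟨hv.1.2, hvB⟩ fun huv => hv.2 (huv ▸ hu)⟩

lemma inter_inter_nonempty (h : IsCliqueSeparation G A B) (hs : (G.induce s).Connected)
    (hsA : (s ∩ A).Nonempty) (hsB : (s ∩ B).Nonempty) : (s ∩ (A ∩ B)).Nonempty := by
  by_cases hsub : s ⊆ A
  · obtain ⟨v, hv, hvB⟩ := hsB
    exact ⟨v, hv, hsub hv, hvB⟩
  obtain ⟨w, hw, hwA⟩ := Set.not_subset.mp hsub
  obtain ⟨u, ⟨hu, huA⟩, v, ⟨hv, hvA⟩, huv⟩ := (induce_connected_iff_exists_adj.mp hs).2 (s ∩ A)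
    Set.inter_subset_left hsA ⟨w, hw, fun hw' => hwA hw'.2⟩
  have huB : u ∈ B := ((h.adj huv).resolve_left fun h' => hvA ⟨hv, h'.2⟩).1
  exact ⟨u, hu, huA, huB⟩

lemma exists_adj_inter (h : IsCliqueSeparation G A B) (hs : (G.induce s).Connected)
    (ht : (G.induce t).Connected) (hst : Disjoint s t) (hsA : (s ∩ A).Nonempty)
    (htA : (t ∩ A).Nonempty) (hadj : ∃ u ∈ s, ∃ v ∈ t, G.Adj u v) :
    ∃ u ∈ s ∩ A, ∃ v ∈ t ∩ A, G.Adj u v := by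
  obtain ⟨u, hu, v, hv, huv⟩ := hadj
  rcases h.adj huv with ⟨huA, hvA⟩ | ⟨huB, hvB⟩
  · exact ⟨u, ⟨hu, huA⟩, v, ⟨hv, hvA⟩, huv⟩
  obtain ⟨x, hx, hxAB⟩ := h.inter_inter_nonempty hs hsA ⟨u, hu, huB⟩
  obtain ⟨y, hy, hyAB⟩ := h.inter_inter_nonempty ht htA ⟨v, hv, hvB⟩
  exact ⟨x, ⟨hx, hxAB.1⟩, y, ⟨hy, hyAB.1⟩, h.isClique hxAB hyAB fun hxy =>
    Set.disjoint_left.mp hst hx (hxy ▸ hy)⟩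

end IsCliqueSeparation

section Simplicial

variable {α V : Type*} {H : SimpleGraph α} {G : SimpleGraph V} {f : α → Set V}

lemma IsMinorModel.inter {A B : Set V} (hf : IsMinorModel H G f) (h : IsCliqueSeparation G A B)
    (hA : ∀ a, (f a ∩ A).Nonempty) : IsMinorModel H G (fun a => f a ∩ A) where
  connected a := h.induce_inter_connected (hf.connected a) (hA a)
  disjoint _ _ hab := (hf.disjoint hab).mono Set.inter_subset_left Set.inter_subset_left
  adj a b hab := h.exists_adj_inter (hf.connected a) (hf.connected b) (hf.disjoint hab.ne)
    (hA a) (hA b) (hf.adj hab)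

lemma IsMinorModel.exists_subset_of_isClique_neighborSet (hf : IsMinorModel H G f) {v : V}
    (hv : G.IsClique (G.neighborSet v)) :
    ∃ g, IsMinorModel H G g ∧ (∀ a, g a ⊆ f a) ∧ ∀ a, v ∈ g a → g a = {v} := by
  by_cases hsingle : ∃ a, f a = {v}
  · obtain ⟨a, ha⟩ := hsingle
    refine ⟨f, hf, fun _ => subset_rfl, fun b hb => ?_⟩
    rwa [hf.eq_of_mem hb (ha ▸ rfl : v ∈ f a)]
  · refine ⟨fun a => f a ∩ {v}ᶜ, hf.inter (.of_isClique_neighborSet hv) fun a => ?_,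
      fun _ => Set.inter_subset_left, fun _ h => absurd rfl h.2⟩
    by_contra hempty
    refine hsingle ⟨a, (hf.nonempty a).subset_singleton_iff.mp fun w hw => ?_⟩
    by_contra hwv
    exact hempty ⟨w, hw, hwv⟩

lemma IsMinor.exists_isMinorModel_simplicial (h : IsMinor H G) (S : Finset V)
    (hS : ∀ v ∈ S, G.IsClique (G.neighborSet v)) :
    ∃ f, IsMinorModel H G f ∧ ∀ v ∈ S, ∀ a, v ∈ f a → f a = {v} := by
  classical
  induction S using Finset.induction_on with
  | empty => simpa [isMinor_iff_exists_isMinorModel] using h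
  | insert v S _ ih =>
    obtain ⟨f, hf, hfS⟩ := ih fun w hw => hS w (Finset.mem_insert_of_mem hw)
    obtain ⟨g, hg, hgf, hgv⟩ :=
      hf.exists_subset_of_isClique_neighborSet (hS v (Finset.mem_insert_self v S))
    refine ⟨g, hg, fun w hw a hwa => ?_⟩
    rcases Finset.mem_insert.mp hw with rfl | hw
    · exact hgv a hwa
    · exact (hg.nonempty a).subset_singleton_iff.mp (hfS w hw a (hgf a hwa) ▸ hgf a)

end Simplicial

section Stack

variable {α V W κ : Type*} {H : SimpleGraph α} {G : SimpleGraph V}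

/-- The graph obtained from `G` by stacking, for every index `c`, a new vertex on the set `S c`,
that is, a vertex adjacent to exactly the vertices of `S c`. -/
def stack (G : SimpleGraph V) (S : κ → Set V) : SimpleGraph (V ⊕ κ) where
  Adj
    | .inl u, .inl v => G.Adj u v
    | .inl u, .inr c => u ∈ S c
    | .inr c, .inl u => u ∈ S c
    | .inr _, .inr _ => False
  symm := ⟨by rintro (u | c) (v | d) h; exacts [h.symm, h, h, h]⟩
  loopless := ⟨by rintro (u | c) h; exacts [G.irrefl h, h]⟩

/-- The inclusion of `G` into a graph obtained from it by stacking vertices. -/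
def stackInl (G : SimpleGraph V) (S : κ → Set V) : G ↪g stack G S where
  toEmbedding := .inl
  map_rel_iff' := .rfl

lemma stack_neighborSet_inr (S : κ → Set V) (c : κ) :
    (stack G S).neighborSet (.inr c) = Sum.inl '' S c := by
  ext (v | d) <;> simp [stack]

lemma isClique_stack_neighborSet_inr {S : κ → Set V} {c : κ} (hS : G.IsClique (S c)) :
    (stack G S).IsClique ((stack G S).neighborSet (.inr c)) := by
  rw [stack_neighborSet_inr]
  rintro _ ⟨u, hu, rfl⟩ _ ⟨v, hv, rfl⟩ huv
  exact hS hu hv fun h => huv (h ▸ rfl)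

/-- Among any two disjoint vertex sets of `H` without an edge between them, one has at most one
element. This is what a minor model of `H` needs in order to survive on one side of a clique
separation. -/
def Unsplittable (H : SimpleGraph α) : Prop :=
  ∀ P Q : Set α, Disjoint P Q → (∀ a ∈ P, ∀ b ∈ Q, ¬ H.Adj a b) → P.Subsingleton ∨ Q.Subsingleton

lemma unsplittable_top : Unsplittable (⊤ : SimpleGraph α) := fun P Q hPQ hadj => by
  by_contra! h
  obtain ⟨a, ha⟩ := h.1.nonempty
  obtain ⟨b, hb⟩ := h.2.nonempty
  exact hadj a ha b hb fun hab => Set.disjoint_left.mp hPQ ha (hab ▸ hb)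

lemma unsplittable_completeBipartiteGraph :
    Unsplittable (completeBipartiteGraph (Fin 3) (Fin 3)) := fun P Q hPQ hadj => by
  have eq_of_same_side : ∀ a a' b b' : Fin 3 ⊕ Fin 3, a ≠ a' → b ≠ b' →
      ¬ (completeBipartiteGraph (Fin 3) (Fin 3)).Adj a b →
      ¬ (completeBipartiteGraph (Fin 3) (Fin 3)).Adj a b' →
      ¬ (completeBipartiteGraph (Fin 3) (Fin 3)).Adj a' b →
      a = b ∨ a = b' ∨ a' = b ∨ a' = b' := by
    rintro (a | a) (a' | a') (b | b) (b' | b') <;> simp <;> omega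
  by_contra! h
  obtain ⟨a, ha, a', ha', haa'⟩ := h.1
  obtain ⟨b, hb, b', hb', hbb'⟩ := h.2
  rcases eq_of_same_side a a' b b' haa' hbb' (hadj a ha b hb) (hadj a ha b' hb')
    (hadj a' ha' b hb) with rfl | rfl | rfl | rfl
  exacts [Set.disjoint_left.mp hPQ ha hb, Set.disjoint_left.mp hPQ ha hb',
    Set.disjoint_left.mp hPQ ha' hb, Set.disjoint_left.mp hPQ ha' hb']

/-- The branch set that `s` leaves behind when the part of the host graph outside the range of `ι`
is replaced by a single vertex: the part of `s` inside the range, and if that part is empty the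
new vertex. -/
def stackTrace (ι : W → V) (s : Set V) : Set (W ⊕ Unit) :=
  {x | x.elim (fun w => ι w ∈ s) fun _ => Disjoint s (Set.range ι)}

lemma stackTrace_of_disjoint {ι : W → V} {s : Set V} (hs : Disjoint s (Set.range ι)) :
    stackTrace ι s = {.inr ()} := by
  ext (w | c)
  · simpa [stackTrace] using fun hw => Set.disjoint_left.mp hs hw ⟨w, rfl⟩
  · simpa [stackTrace] using hs

lemma stackTrace_of_not_disjoint {ι : W → V} {s : Set V} (hs : ¬ Disjoint s (Set.range ι)) :
    stackTrace ι s = .inl '' (ι ⁻¹' s) := by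
  ext (w | c) <;> simp [stackTrace, hs]

namespace IsCliqueSeparation

variable {G₁ : SimpleGraph W} {ι : G₁ ↪g G} {B s t : Set V}

lemma induce_stackTrace_connected (h : IsCliqueSeparation G (Set.range ι) B)
    (hs : (G.induce s).Connected) :
    ((stack G₁ fun _ : Unit => ι ⁻¹' B).induce (stackTrace ι s)).Connected := by
  by_cases hdisj : Disjoint s (Set.range ι)
  · rw [stackTrace_of_disjoint hdisj]
    exact Connected.of_subsingleton
  · rw [stackTrace_of_not_disjoint hdisj]
    exact induce_image_connected (stackInl G₁ _).toHom <| induce_preimage_connected ι <|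
      h.induce_inter_connected hs (Set.not_disjoint_iff_nonempty_inter.mp hdisj)

lemma exists_adj_stackTrace_of_disjoint (h : IsCliqueSeparation G (Set.range ι) B)
    (hs : Disjoint s (Set.range ι)) (ht : ¬ Disjoint t (Set.range ι))
    (htconn : (G.induce t).Connected) (hadj : ∃ u ∈ s, ∃ v ∈ t, G.Adj u v) :
    ∃ x ∈ stackTrace ι s, ∃ y ∈ stackTrace ι t, (stack G₁ fun _ : Unit => ι ⁻¹' B).Adj x y := by
  obtain ⟨u, hu, v, hv, huv⟩ := hadj
  have hvB : v ∈ B := ((h.adj huv).resolve_left fun h' => Set.disjoint_left.mp hs hu h'.1).2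
  obtain ⟨_, hw, ⟨w, rfl⟩, hwB⟩ := h.inter_inter_nonempty htconn
    (Set.not_disjoint_iff_nonempty_inter.mp ht) ⟨v, hv, hvB⟩
  exact ⟨.inr (), hs, .inl w, hw, hwB⟩

end IsCliqueSeparation

lemma IsMinorModel.stackTrace {G₁ : SimpleGraph W} {f : α → Set V} {B : Set V}
    (hf : IsMinorModel H G f) (ι : G₁ ↪g G) (hsep : IsCliqueSeparation G (Set.range ι) B)
    (hsub : {a | Disjoint (f a) (Set.range ι)}.Subsingleton) :
    IsMinorModel H (stack G₁ fun _ : Unit => ι ⁻¹' B) fun a => stackTrace ι (f a) where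
  connected a := hsep.induce_stackTrace_connected (hf.connected a)
  disjoint a b hab := Set.disjoint_left.mpr fun x => match x with
    | .inl w => fun ha hb => hab (hf.eq_of_mem (v := ι w) ha hb)
    | .inr _ => fun ha hb => hab (hsub ha hb)
  adj a b hab := by
    by_cases ha : Disjoint (f a) (Set.range ι)
    · exact hsep.exists_adj_stackTrace_of_disjoint ha (fun hb => hab.ne (hsub ha hb))
        (hf.connected b) (hf.adj hab)
    by_cases hb : Disjoint (f b) (Set.range ι)
    · obtain ⟨y, hy, x, hx, hyx⟩ :=
        hsep.exists_adj_stackTrace_of_disjoint hb ha (hf.connected a) (hf.adj hab.symm)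
      exact ⟨x, hx, y, hy, hyx.symm⟩
    obtain ⟨_, ⟨hu, u, rfl⟩, _, ⟨hv, v, rfl⟩, huv⟩ := hsep.exists_adj_inter (hf.connected a)
      (hf.connected b) (hf.disjoint hab.ne) (Set.not_disjoint_iff_nonempty_inter.mp ha)
      (Set.not_disjoint_iff_nonempty_inter.mp hb) (hf.adj hab)
    exact ⟨.inl u, hu, .inl v, hv, ι.map_adj_iff.mp huv⟩

lemma IsMinor.stack_or_stack {V₁ V₂ : Type*} {G₁ : SimpleGraph V₁} {G₂ : SimpleGraph V₂}
    (h : IsMinor H G) (hH : Unsplittable H) (ι₁ : G₁ ↪g G) (ι₂ : G₂ ↪g G)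
    (hsep : IsCliqueSeparation G (Set.range ι₁) (Set.range ι₂)) :
    IsMinor H (stack G₁ fun _ : Unit => ι₁ ⁻¹' Set.range ι₂) ∨
      IsMinor H (stack G₂ fun _ : Unit => ι₂ ⁻¹' Set.range ι₁) := by
  obtain ⟨f, hf⟩ := isMinor_iff_exists_isMinorModel.mp h
  refine (hH {a | Disjoint (f a) (Set.range ι₁)} {a | Disjoint (f a) (Set.range ι₂)}
    (Set.disjoint_left.mpr fun a h₁ h₂ => ?_) fun a h₁ b h₂ hab => ?_).imp
    (fun hsub => (hf.stackTrace ι₁ hsep hsub).isMinor)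
    fun hsub => (hf.stackTrace ι₂ hsep.symm hsub).isMinor
  · obtain ⟨v, hv⟩ := hf.nonempty a
    exact (hsep.cover v).elim (Set.disjoint_left.mp h₁ hv) (Set.disjoint_left.mp h₂ hv)
  · obtain ⟨u, hu, v, hv, huv⟩ := hf.adj hab
    exact (hsep.adj huv).elim (fun h => Set.disjoint_left.mp h₁ hu h.1)
      fun h => Set.disjoint_left.mp h₂ hv h.2

end Stack

/-- The graph `Gₙ`: `n` nested triangles, of which consecutive ones span an octahedron. The vertex
`(i, k)` is the vertex of colour `k` in the `i`-th triangle. -/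
def tube (n : ℕ) : SimpleGraph (Fin n × Fin 3) where
  Adj p q := p.2 ≠ q.2 ∧ p.1.1 ≤ q.1.1 + 1 ∧ q.1.1 ≤ p.1.1 + 1
  symm := ⟨fun _ _ h => ⟨h.1.symm, h.2.2, h.2.1⟩⟩
  loopless := ⟨fun _ h => h.1 rfl⟩

/-- The graph `Gₙ` with a vertex stacked on its last triangle. -/
def cappedTube (n : ℕ) : SimpleGraph ((Fin n × Fin 3) ⊕ Unit) :=
  stack (tube n) fun _ => {p | p.1.1 + 1 = n}

/-- The octahedron `G₂` with a vertex stacked on each of its two triangles `{e} × Fin 3`. -/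
def bicappedOctahedron : SimpleGraph ((Fin 2 × Fin 3) ⊕ Fin 2) :=
  stack (tube 2) fun e => {p | p.1 = e}

/-- All triangles of `cappedTube (n + 2)` except the last one. -/
def tubeLower (n : ℕ) : tube (n + 1) ↪g cappedTube (n + 2) where
  toFun p := .inl (p.1.castSucc, p.2)
  inj' p q h := by simpa [Prod.ext_iff] using h
  map_rel_iff' := .rfl

/-- The last two triangles of `cappedTube (n + 2)` and the cap. -/
def tubeUpper (n : ℕ) : cappedTube 2 ↪g cappedTube (n + 2) where
  toFun := Sum.map (fun p => (p.1.natAdd n, p.2)) id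
  inj' := Sum.map_injective.mpr ⟨fun p q h => by simpa [Prod.ext_iff] using h, fun _ _ h => h⟩
  map_rel_iff' {x y} := by
    rcases x with ⟨i, k⟩ | c <;> rcases y with ⟨j, l⟩ | d
    · refine and_congr_right' (and_congr ?_ ?_)
      · change n + i.1 ≤ n + j.1 + 1 ↔ i.1 ≤ j.1 + 1
        omega
      · change n + j.1 ≤ n + i.1 + 1 ↔ j.1 ≤ i.1 + 1
        omega
    · change n + i.1 + 1 = n + 2 ↔ i.1 + 1 = 2
      omega
    · change n + j.1 + 1 = n + 2 ↔ j.1 + 1 = 2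
      omega
    · rfl

lemma inl_mem_range_tubeLower {n : ℕ} {p : Fin (n + 2) × Fin 3} :
    .inl p ∈ Set.range (tubeLower n) ↔ p.1.1 ≤ n := by
  refine ⟨?_, fun hp => ⟨(⟨p.1, by omega⟩, p.2), rfl⟩⟩
  rintro ⟨q, hq⟩
  obtain rfl := Sum.inl_injective hq
  exact Nat.lt_succ_iff.mp q.1.2

lemma inr_notMem_range_tubeLower {n : ℕ} (c : Unit) : .inr c ∉ Set.range (tubeLower n) := by
  rintro ⟨q, ⟨⟩⟩

lemma inl_mem_range_tubeUpper {n : ℕ} {p : Fin (n + 2) × Fin 3} :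
    .inl p ∈ Set.range (tubeUpper n) ↔ n ≤ p.1.1 := by
  refine ⟨?_, fun hp => ⟨.inl (⟨p.1 - n, by omega⟩, p.2), ?_⟩⟩
  · rintro ⟨q | c, hq⟩
    · obtain rfl := Sum.inl_injective hq
      exact Nat.le_add_right n q.1
    · cases hq
  · exact congrArg Sum.inl (Prod.ext (Fin.ext (Nat.add_sub_of_le hp)) rfl)

lemma inr_mem_range_tubeUpper {n : ℕ} (c : Unit) : .inr c ∈ Set.range (tubeUpper n) :=
  ⟨.inr c, rfl⟩

lemma isCliqueSeparation_tube (n : ℕ) :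
    IsCliqueSeparation (cappedTube (n + 2)) (Set.range (tubeLower n))
      (Set.range (tubeUpper n)) where
  cover
    | .inl p => by
      rw [inl_mem_range_tubeLower, inl_mem_range_tubeUpper]
      exact le_total _ _
    | .inr c => .inr (inr_mem_range_tubeUpper c)
  adj := by
    rintro (p | c) (q | d) h
    · simp only [inl_mem_range_tubeLower, inl_mem_range_tubeUpper]
      have h : (tube (n + 2)).Adj p q := h
      have := h.2
      omega
    · have h : p.1.1 + 1 = n + 2 := h
      exact .inr ⟨inl_mem_range_tubeUpper.mpr (by omega), inr_mem_range_tubeUpper d⟩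
    · have h : q.1.1 + 1 = n + 2 := h
      exact .inr ⟨inr_mem_range_tubeUpper c, inl_mem_range_tubeUpper.mpr (by omega)⟩
    · exact h.elim
  isClique := by
    rintro (p | c) ⟨hp, hp'⟩ (q | d) ⟨hq, hq'⟩ hpq
    · rw [inl_mem_range_tubeLower] at hp hq
      rw [inl_mem_range_tubeUpper] at hp' hq'
      refine ⟨fun hcol => hpq ?_, by omega, by omega⟩
      exact congrArg Sum.inl (Prod.ext (Fin.ext (by omega)) hcol)
    · exact absurd hq (inr_notMem_range_tubeLower d)
    all_goals exact absurd hp (inr_notMem_range_tubeLower c)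

section Reduction

variable {α : Type*} {H : SimpleGraph α}

lemma stack_tubeLower (n : ℕ) :
    (stack (tube (n + 1)) fun _ : Unit => tubeLower n ⁻¹' Set.range (tubeUpper n)) =
      cappedTube (n + 1) := by
  suffices tubeLower n ⁻¹' Set.range (tubeUpper n) = {p | p.1.1 + 1 = n + 1} by
    rw [this, cappedTube]
  ext p
  have : n ≤ p.1.1 ↔ p.1.1 + 1 = n + 1 := by omega
  exact inl_mem_range_tubeUpper.trans this

lemma IsMinor.bicappedOctahedron_of_stack_tubeUpper {n : ℕ}
    (h : IsMinor H (stack (cappedTube 2) fun _ : Unit =>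
      tubeUpper n ⁻¹' Set.range (tubeLower n))) : IsMinor H bicappedOctahedron := by
  let φ : ((Fin 2 × Fin 3) ⊕ Unit) ⊕ Unit → (Fin 2 × Fin 3) ⊕ Fin 2 :=
    Sum.elim (Sum.map id fun _ => 1) fun _ => .inr 0
  have bottom : ∀ p, tubeUpper n (.inl p) ∈ Set.range (tubeLower n) → p.1 = 0 := fun p hp => by
    have : n + p.1.1 ≤ n := inl_mem_range_tubeLower.mp hp
    omega
  have top : ∀ p : Fin 2 × Fin 3, p.1.1 + 1 = 2 → p.1 = 1 := fun p hp => by omega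
  refine h.map ⟨φ, ?_⟩ ?_
  · rintro ((p | c) | c) ((q | d) | d) h
    exacts [h, top p h, bottom p h, top q h, h, inr_notMem_range_tubeLower c h, bottom q h,
      inr_notMem_range_tubeLower d h, h]
  · rintro ((p | c) | c) ((q | d) | d) h <;> simp_all [φ]

lemma IsMinor.bicappedOctahedron_of_cappedTube_one (h : IsMinor H (cappedTube 1)) :
    IsMinor H bicappedOctahedron := by
  refine h.map ⟨Sum.map (fun p => (1, p.2)) fun _ => 1, ?_⟩ (Sum.map_injective.mpr ⟨?_, ?_⟩)
  · rintro (p | c) (q | d) h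
    exacts [⟨h.1, Nat.le_succ 1, Nat.le_succ 1⟩, rfl, rfl, h]
  · exact fun p q h => Prod.ext (Subsingleton.elim _ _) (Prod.ext_iff.mp h).2
  · exact Function.injective_of_subsingleton _

lemma IsMinor.bicappedOctahedron_of_cappedTube (hH : Unsplittable H) {n : ℕ}
    (h : IsMinor H (cappedTube (n + 1))) : IsMinor H bicappedOctahedron := by
  induction n with
  | zero => exact h.bicappedOctahedron_of_cappedTube_one
  | succ n ih =>
    rcases h.stack_or_stack hH (tubeLower n) (tubeUpper n) (isCliqueSeparation_tube n) with h | h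
    · exact ih (stack_tubeLower n ▸ h)
    · exact h.bicappedOctahedron_of_stack_tubeUpper

lemma IsMinor.bicappedOctahedron_of_tube (hH : Unsplittable H) {n : ℕ}
    (h : IsMinor H (tube (n + 1))) : IsMinor H bicappedOctahedron :=
  (h.map (stackInl _ _).toHom Sum.inl_injective).bicappedOctahedron_of_cappedTube hH

end Reduction

section BicappedOctahedron

variable {α : Type*} {H : SimpleGraph α} {f : α → Set ((Fin 2 × Fin 3) ⊕ Fin 2)}
  {K : Fin 3 ⊕ Fin 3 → Set ((Fin 2 × Fin 3) ⊕ Fin 2)}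

lemma eq_rev_of_ne : ∀ {e x : Fin 2}, x ≠ e → x = e.rev := by decide

lemma isClique_bicappedOctahedron_neighborSet_inr (e : Fin 2) :
    bicappedOctahedron.IsClique (bicappedOctahedron.neighborSet (.inr e)) := by
  refine isClique_stack_neighborSet_inr fun p hp q hq hpq => ?_
  obtain rfl : p.1 = e := hp
  have hpq' : q.1 = p.1 := hq
  exact ⟨fun h => hpq (Prod.ext hpq'.symm h), by omega, by omega⟩

lemma IsMinor.exists_isMinorModel_bicappedOctahedron (h : IsMinor H bicappedOctahedron) :
    ∃ f, IsMinorModel H bicappedOctahedron f ∧ ∀ e a, .inr e ∈ f a → f a = {.inr e} := by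
  obtain ⟨f, hf, hcap⟩ := h.exists_isMinorModel_simplicial (Finset.univ.map .inr) fun v hv => by
    obtain ⟨e, -, rfl⟩ := Finset.mem_map.mp hv
    exact isClique_bicappedOctahedron_neighborSet_inr e
  exact ⟨f, hf, fun e => hcap _ (Finset.mem_map_of_mem _ (Finset.mem_univ e))⟩

namespace IsMinorModel

lemma exists_singletons_of_inr_notMem [Fintype α] (hf : IsMinorModel H bicappedOctahedron f)
    (hcap : ∀ e a, .inr e ∉ f a) :
    ∃ (S : Finset α) (p : α → Fin 2 × Fin 3), 2 * Fintype.card α ≤ 6 + S.card ∧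
      ∀ a ∈ S, f a = {.inl (p a)} := by
  classical
  have hinl : ∀ a, ∀ v ∈ f a, ∃ p : Fin 2 × Fin 3, .inl p = v := fun a v hv => by
    cases v with
    | inl p => exact ⟨p, rfl⟩
    | inr e => exact absurd hv (hcap e a)
  have hcard := hf.two_mul_card_le (A := .inl '' Set.univ) (Set.toFinite _)
    fun a v hv => by simpa using hinl a v hv
  rw [Set.ncard_image_of_injective _ Sum.inl_injective, Set.ncard_univ] at hcard
  have hex : ∀ a, ∃ p : Fin 2 × Fin 3, (f a).ncard = 1 → f a = {.inl p} := fun a => by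
    obtain ⟨v, hv⟩ := hf.nonempty a
    obtain ⟨p, rfl⟩ := hinl a v hv
    refine ⟨p, fun h => ?_⟩
    obtain ⟨w, hw⟩ := Set.ncard_eq_one.mp h
    rw [hw] at hv ⊢
    rw [hv]
  choose p hp using hex
  refine ⟨Finset.univ.filter fun a => (f a).ncard = 1, p, ?_,
    fun a ha => hp a (Finset.mem_filter.mp ha).2⟩
  rw [← Set.ncard_coe_finset, Finset.coe_filter_univ]
  simpa using hcard

lemma snd_ne_of_adj (hf : IsMinorModel H bicappedOctahedron f) {a b : α} {p q : Fin 2 × Fin 3}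
    (ha : f a = {.inl p}) (hb : f b = {.inl q}) (hab : H.Adj a b) : p.2 ≠ q.2 := by
  obtain ⟨u, hu, v, hv, huv⟩ := hf.adj hab
  rw [ha, Set.mem_singleton_iff] at hu
  rw [hb, Set.mem_singleton_iff] at hv
  subst hu hv
  exact And.left huv

lemma ncard_neighborSet_le_three (hf : IsMinorModel H bicappedOctahedron f) {a : α} {e : Fin 2}
    (ha : f a = {.inr e}) : (H.neighborSet a).ncard ≤ 3 := by
  obtain ⟨g, hg, -⟩ := hf.exists_injective_neighborSet ha
  have hcard : (bicappedOctahedron.neighborSet (.inr e)).ncard = 3 := by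
    have hS : {p : Fin 2 × Fin 3 | p.1 = e} = Prod.mk e '' Set.univ := by
      ext ⟨i, k⟩
      simp [eq_comm]
    rw [bicappedOctahedron, stack_neighborSet_inr, Set.ncard_image_of_injective _ Sum.inl_injective,
      hS, Set.ncard_image_of_injective _ (Prod.mk_right_injective e), Set.ncard_univ, Nat.card_fin]
  rw [← hcard]
  exact Nat.card_le_card_of_injective g hg

end IsMinorModel

theorem not_isMinor_top_bicappedOctahedron :
    ¬ IsMinor (⊤ : SimpleGraph (Fin 5)) bicappedOctahedron := fun h => by
  obtain ⟨f, hf, hcap⟩ := h.exists_isMinorModel_bicappedOctahedron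
  have hcap' : ∀ e a, .inr e ∉ f a := fun e a hea => by
    have := hf.ncard_neighborSet_le_three (hcap e a hea)
    rw [neighborSet_top, Set.ncard_compl] at this
    simp at this
  obtain ⟨S, p, hS, hp⟩ := hf.exists_singletons_of_inr_notMem hcap'
  have hinj : Set.InjOn (fun a => (p a).2) S := fun a ha b hb hab => by
    by_contra hne
    exact hf.snd_ne_of_adj (hp a ha) (hp b hb) hne hab
  have := Finset.card_le_card_of_injOn _ (fun a _ => Finset.mem_univ ((p a).2)) hinj
  simp only [Fintype.card_fin, Finset.card_univ] at hS this
  omega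

namespace IsMinorModel

lemma exists_equiv_of_eq_inr
    (hK : IsMinorModel (completeBipartiteGraph (Fin 3) (Fin 3)) bicappedOctahedron K) {i : Fin 3}
    {e : Fin 2} (hi : K (.inl i) = {.inr e}) :
    ∃ c : Fin 3 ≃ Fin 3, ∀ j, .inl (e, c j) ∈ K (.inr j) := by
  have key : ∀ j, ∃ k, .inl (e, k) ∈ K (.inr j) := fun j => by
    obtain ⟨u, hu, v, hv, huv⟩ := hK.adj (a := .inl i) (b := .inr j) (by simp)
    rw [hi, Set.mem_singleton_iff] at hu
    subst hu
    rw [← mem_neighborSet, bicappedOctahedron, stack_neighborSet_inr] at huv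
    obtain ⟨⟨_, k⟩, rfl, rfl⟩ := huv
    exact ⟨k, hv⟩
  choose c hc using key
  have hinj : Function.Injective c := fun j j' h =>
    Sum.inr_injective (hK.eq_of_mem (hc j) (h ▸ hc j'))
  exact ⟨.ofBijective c hinj.bijective_of_finite, hc⟩

lemma inl_notMem_of_eq_inr
    (hK : IsMinorModel (completeBipartiteGraph (Fin 3) (Fin 3)) bicappedOctahedron K) {i : Fin 3}
    {e : Fin 2} (hi : K (.inl i) = {.inr e}) (i' k : Fin 3) : .inl (e, k) ∉ K (.inl i') := by
  intro hk
  obtain ⟨c, hc⟩ := hK.exists_equiv_of_eq_inr hi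
  have := hK.eq_of_mem hk (c.apply_symm_apply k ▸ hc (c.symm k))
  cases this

lemma eq_inl_rev_of_eq_inr
    (hK : IsMinorModel (completeBipartiteGraph (Fin 3) (Fin 3)) bicappedOctahedron K)
    (hcap : ∀ e a, .inr e ∈ K a → K a = {.inr e}) {i : Fin 3} {e : Fin 2}
    (hi : K (.inl i) = {.inr e}) {i' : Fin 3} (hne : i' ≠ i) {v} (hv : v ∈ K (.inl i')) :
    ∃ k, v = .inl (e.rev, k) := by
  rcases v with ⟨x, k⟩ | x
  · have hx : x ≠ e := fun h => hK.inl_notMem_of_eq_inr hi i' k (h ▸ hv)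
    exact ⟨k, eq_rev_of_ne hx ▸ rfl⟩
  · exfalso
    have hi' := hcap x _ hv
    have hx : x ≠ e := by
      rintro rfl
      exact hne (Sum.inl_injective (hK.eq_of_mem hv (hi ▸ rfl)))
    obtain ⟨i'', h₁, h₂⟩ :=
      (by decide : ∀ i i' : Fin 3, ∃ i'', i'' ≠ i ∧ i'' ≠ i') i i'
    obtain ⟨w, hw⟩ := hK.nonempty (.inl i'')
    have full : ∀ y : Fin 2, y = e ∨ y = x := fun y => by omega
    rcases w with ⟨y, k⟩ | y <;> rcases full y with rfl | rfl
    · exact hK.inl_notMem_of_eq_inr hi _ _ hw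
    · exact hK.inl_notMem_of_eq_inr hi' _ _ hw
    · exact h₁ (Sum.inl_injective (hK.eq_of_mem hw (hi ▸ rfl)))
    · exact h₂ (Sum.inl_injective (hK.eq_of_mem hw hv))

lemma exists_pair_of_eq_inr
    (hK : IsMinorModel (completeBipartiteGraph (Fin 3) (Fin 3)) bicappedOctahedron K)
    (hcap : ∀ e a, .inr e ∈ K a → K a = {.inr e}) {i : Fin 3} {e : Fin 2}
    (hi : K (.inl i) = {.inr e}) {c : Fin 3 ≃ Fin 3} (hc : ∀ j, .inl (e, c j) ∈ K (.inr j))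
    {i' : Fin 3} (hne : i' ≠ i) :
    ∃ j l, c j ≠ l ∧ .inl (e.rev, c j) ∈ K (.inl i') ∧
      .inl (e.rev, l) ∈ K (.inl i') ∪ K (.inr j) := by
  obtain ⟨v, hv⟩ := hK.nonempty (.inl i')
  obtain ⟨k, rfl⟩ := hK.eq_inl_rev_of_eq_inr hcap hi hne hv
  obtain ⟨j, rfl⟩ := c.surjective k
  obtain ⟨u, hu, w, hw, huw⟩ := hK.adj (a := .inl i') (b := .inr j) (by simp)
  obtain ⟨m, rfl⟩ := hK.eq_inl_rev_of_eq_inr hcap hi hne hu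
  by_cases hm : c j = m
  · subst hm
    rcases w with ⟨y, l⟩ | x
    · have hl : c j ≠ l := And.left huw
      refine ⟨j, l, hl, hv, .inr ?_⟩
      have hy : y ≠ e := by
        rintro rfl
        have := hK.eq_of_mem hw (c.apply_symm_apply l ▸ hc (c.symm l))
        exact hl (c.eq_symm_apply.mp (Sum.inr_injective this))
      exact eq_rev_of_ne hy ▸ hw
    · have := hcap x _ hw ▸ hc j
      cases this
  · exact ⟨j, m, hm, hv, .inl hu⟩

lemma inl_ne_singleton_inr
    (hK : IsMinorModel (completeBipartiteGraph (Fin 3) (Fin 3)) bicappedOctahedron K)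
    (hcap : ∀ e a, .inr e ∈ K a → K a = {.inr e}) (i : Fin 3) (e : Fin 2) :
    K (.inl i) ≠ {.inr e} := fun hi => by
  obtain ⟨c, hc⟩ := hK.exists_equiv_of_eq_inr hi
  obtain ⟨i₁, i₂, h₁, h₂, h₁₂⟩ :=
    (by decide : ∀ i : Fin 3, ∃ i₁ i₂, i₁ ≠ i ∧ i₂ ≠ i ∧ i₁ ≠ i₂) i
  obtain ⟨j₁, l₁, hl₁, hk₁, hl₁'⟩ := hK.exists_pair_of_eq_inr hcap hi hc h₁
  obtain ⟨j₂, l₂, hl₂, hk₂, hl₂'⟩ := hK.exists_pair_of_eq_inr hcap hi hc h₂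
  have hk : c j₁ ≠ c j₂ := fun h =>
    h₁₂ (Sum.inl_injective (hK.eq_of_mem hk₁ (h ▸ hk₂)))
  have hj : j₁ ≠ j₂ := fun h => hk (h ▸ rfl)
  have hdisj : Disjoint (K (.inl i₁) ∪ K (.inr j₁)) (K (.inl i₂) ∪ K (.inr j₂)) := by
    simp only [Set.disjoint_union_left, Set.disjoint_union_right]
    refine ⟨⟨hK.disjoint ?_, hK.disjoint ?_⟩, hK.disjoint ?_, hK.disjoint ?_⟩ <;> simp [h₁₂, hj]
  have hkl : c j₁ ≠ l₂ := fun h => Set.disjoint_left.mp hdisj (.inl hk₁) (h ▸ hl₂')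
  have hll : l₁ ≠ l₂ := fun h => Set.disjoint_left.mp hdisj hl₁' (h ▸ hl₂')
  have hlk : l₁ ≠ c j₂ := fun h => Set.disjoint_left.mp hdisj hl₁' (h ▸ .inl hk₂)
  -- `c j₁`, `l₁`, `c j₂`, `l₂` are four distinct elements of `Fin 3`.
  omega

lemma inr_notMem_of_completeBipartiteGraph
    (hK : IsMinorModel (completeBipartiteGraph (Fin 3) (Fin 3)) bicappedOctahedron K)
    (hcap : ∀ e a, .inr e ∈ K a → K a = {.inr e}) (e : Fin 2) (a : Fin 3 ⊕ Fin 3) :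
    .inr e ∉ K a := fun hea => by
  cases a with
  | inl i => exact hK.inl_ne_singleton_inr hcap i e (hcap e _ hea)
  | inr j =>
    let swap : completeBipartiteGraph (Fin 3) (Fin 3) →g completeBipartiteGraph (Fin 3) (Fin 3) :=
      ⟨Sum.swap, by rintro (a | a) (b | b) <;> simp⟩
    exact (hK.comp swap Sum.swap_leftInverse.injective).inl_ne_singleton_inr
      (fun e a => hcap e _) j e (hcap e _ hea)

end IsMinorModel

lemma card_le_card_mul_card_image_snd {ι β γ : Type*} [Fintype ι] [Fintype β] [DecidableEq γ]
    {p : ι → β × γ} (hp : Function.Injective p) :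
    Fintype.card ι ≤ Fintype.card β * (Finset.univ.image fun a => (p a).2).card := by
  rw [← Finset.card_univ, ← Finset.card_univ, ← Finset.card_product]
  exact Finset.card_le_card_of_injOn p (fun a _ => by simp) hp.injOn

theorem not_isMinor_completeBipartiteGraph_bicappedOctahedron :
    ¬ IsMinor (completeBipartiteGraph (Fin 3) (Fin 3)) bicappedOctahedron := fun h => by
  obtain ⟨f, hf, hcap⟩ := h.exists_isMinorModel_bicappedOctahedron
  obtain ⟨S, p, hS, hp⟩ := hf.exists_singletons_of_inr_notMem
    (hf.inr_notMem_of_completeBipartiteGraph hcap)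
  obtain rfl : S = Finset.univ := by
    rw [← Finset.card_eq_iff_eq_univ]
    have := S.card_le_univ
    simp only [Fintype.card_sum, Fintype.card_fin] at hS this ⊢
    omega
  have hp : ∀ a, f a = {.inl (p a)} := fun a => hp a (Finset.mem_univ a)
  have hinj : Function.Injective p := fun a b hab =>
    hf.eq_of_mem (hp a ▸ rfl : .inl (p a) ∈ f a) (by rw [hp b, hab]; rfl)
  have hdisj : Disjoint (Finset.univ.image fun i => (p (.inl i)).2)
      (Finset.univ.image fun j => (p (.inr j)).2) := by
    simp only [Finset.disjoint_left, Finset.mem_image, Finset.mem_univ, true_and]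
    rintro _ ⟨i, rfl⟩ ⟨j, hj⟩
    exact hf.snd_ne_of_adj (hp (.inl i)) (hp (.inr j)) (by simp) hj.symm
  have hle := Finset.card_union_of_disjoint hdisj ▸ Finset.card_le_univ _
  have hleft := card_le_card_mul_card_image_snd (hinj.comp Sum.inl_injective)
  have hright := card_le_card_mul_card_image_snd (hinj.comp Sum.inr_injective)
  simp only [Fintype.card_fin, Function.comp_apply] at hle hleft hright
  omega

end BicappedOctahedron

theorem tube_planar (n : ℕ) : Planar (tube (n + 1)) :=
  ⟨fun h => not_isMinor_top_bicappedOctahedron (h.bicappedOctahedron_of_tube unsplittable_top),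
    fun h => not_isMinor_completeBipartiteGraph_bicappedOctahedron
      (h.bicappedOctahedron_of_tube unsplittable_completeBipartiteGraph)⟩

section Cliques

variable {V : Type*} {G : SimpleGraph V} {r : ℕ}

lemma card_le_two_of_isNClique_subset (hG : G.CliqueFree (r + 1)) {X : Finset V}
    (hX : X.card ≤ r + 1) {F : Finset (Finset V)} (hF : ∀ s ∈ F, G.IsNClique r s ∧ s ⊆ X) :
    F.card ≤ 2 := by
  classical
  by_contra! hcard
  obtain ⟨a, b, c, ha, hb, hc, hab, hac, hbc⟩ := Finset.two_lt_card_iff.mp hcard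
  have eq_erase : ∀ {w s}, w ∈ X → s ∈ F → w ∉ s → s = X.erase w := fun {w s} hw hs hws =>
    Finset.eq_of_subset_of_card_le (Finset.subset_erase.mpr ⟨(hF s hs).2, hws⟩) <| by
      rw [(hF s hs).1.card_eq, Finset.card_erase_of_mem hw]
      omega
  have eq_of_notMem : ∀ {w s t}, w ∈ X → s ∈ F → t ∈ F → w ∉ s → w ∉ t → s = t :=
    fun hw hs ht hws hwt => (eq_erase hw hs hws).trans (eq_erase hw ht hwt).symm
  have hclique : G.IsClique (X : Set V) := fun u hu v hv huv => by
    by_contra hadj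
    have miss : ∀ s ∈ F, u ∉ s ∨ v ∉ s := fun s hs =>
      not_and_or.mp fun h => hadj ((hF s hs).1.isClique h.1 h.2 huv)
    -- Two of the three sets miss the same one of `u` and `v`, hence are equal.
    rcases miss a ha with h₁ | h₁ <;> rcases miss b hb with h₂ | h₂ <;>
      rcases miss c hc with h₃ | h₃
    all_goals grind
  refine hG X ⟨hclique, hX.antisymm ?_⟩
  by_contra! hlt
  have eq_X : ∀ s ∈ F, s = X := fun s hs => Finset.eq_of_subset_of_card_le (hF s hs).2 <| by
    rw [(hF s hs).1.card_eq]
    omega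
  exact hab ((eq_X a ha).trans (eq_X b hb).symm)

lemma ncard_cliqueSet_le_two_mul_card (hG : G.CliqueFree (r + 1)) {ι : Type*} [Finite ι]
    {X : ι → Finset V} (hcover : ∀ s, G.IsNClique r s → ∃ i, s ⊆ X i)
    (hX : ∀ i, (X i).card ≤ r + 1) : (G.cliqueSet r).ncard ≤ 2 * Nat.card ι := by
  classical
  have := Fintype.ofFinite ι
  let cliquesIn : ι → Finset (Finset V) := fun i => (X i).powerset.filter fun s => G.IsNClique r s
  calc (G.cliqueSet r).ncard
      ≤ ((Finset.univ.biUnion cliquesIn : Finset (Finset V)) : Set (Finset V)).ncard :=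
        Set.ncard_le_ncard fun s hs => by
          obtain ⟨i, hi⟩ := hcover s hs
          exact Finset.mem_biUnion.mpr ⟨i, Finset.mem_univ i,
            Finset.mem_filter.mpr ⟨Finset.mem_powerset.mpr hi, hs⟩⟩
    _ ≤ Finset.card (Finset.univ : Finset ι) * 2 := by
        rw [Set.ncard_coe_finset]
        refine Finset.card_biUnion_le_card_mul _ _ _ fun i _ =>
          card_le_two_of_isNClique_subset hG (hX i) fun s hs => ?_
        exact ⟨(Finset.mem_filter.mp hs).2, Finset.mem_powerset.mp (Finset.mem_filter.mp hs).1⟩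
    _ = 2 * Nat.card ι := by rw [Finset.card_univ, Nat.card_eq_fintype_card, mul_comm]

end Cliques

section Triangles

variable {κ : Type*} [Fintype κ]

/-- The tuples of levels below `n` any two of which differ by at most one. For `κ = Fin 3` these
are the triangles of `Gₙ`, a triangle being encoded by the levels of its three colours. -/
def levelTuples (κ : Type*) [Fintype κ] [DecidableEq κ] (n : ℕ) : Finset (κ → ℕ) :=
  (Fintype.piFinset fun _ => Finset.range n).filter fun x => ∀ k l, x k ≤ x l + 1

lemma mem_levelTuples [DecidableEq κ] {n : ℕ} {x : κ → ℕ} :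
    x ∈ levelTuples κ n ↔ (∀ k, x k < n) ∧ ∀ k l, x k ≤ x l + 1 := by
  simp [levelTuples]

lemma levelTuples_add_two [DecidableEq κ] (n : ℕ) :
    levelTuples κ (n + 2) =
      levelTuples κ (n + 1) ∪ Fintype.piFinset fun _ => ({n, n + 1} : Finset ℕ) := by
  ext x
  simp only [Finset.mem_union, mem_levelTuples, Fintype.mem_piFinset, Finset.mem_insert,
    Finset.mem_singleton]
  constructor
  · rintro ⟨hlt, hx⟩
    by_cases hbelow : ∀ k, x k < n + 1
    · exact .inl ⟨hbelow, hx⟩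
    · push Not at hbelow
      obtain ⟨k, hk⟩ := hbelow
      refine .inr fun l => ?_
      have := hx k l
      have := hlt l
      omega
  · rintro (⟨hlt, hx⟩ | hx)
    · exact ⟨fun k => (hlt k).trans (Nat.lt_succ_self _), hx⟩
    · refine ⟨fun k => ?_, fun k l => ?_⟩
      · have := hx k
        omega
      · have := hx k
        have := hx l
        omega

lemma levelTuples_inter_piFinset [DecidableEq κ] (n : ℕ) :
    levelTuples κ (n + 1) ∩ (Fintype.piFinset fun _ => ({n, n + 1} : Finset ℕ)) =
      {fun _ => n} := by
  ext x
  simp only [Finset.mem_inter, mem_levelTuples, Fintype.mem_piFinset, Finset.mem_insert,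
    Finset.mem_singleton, funext_iff]
  grind

lemma card_levelTuples [DecidableEq κ] (n : ℕ) :
    (levelTuples κ (n + 1)).card = (2 ^ Fintype.card κ - 1) * n + 1 := by
  induction n with
  | zero =>
    refine Finset.card_eq_one.mpr ⟨0, Finset.ext fun x => ?_⟩
    rw [mem_levelTuples, Finset.mem_singleton, funext_iff]
    simp only [Pi.zero_apply]
    grind
  | succ n ih =>
    have htop : (Fintype.piFinset fun _ : κ => ({n, n + 1} : Finset ℕ)).card =
        2 ^ Fintype.card κ := by simp
    have hunion := Finset.card_union_add_card_inter (levelTuples κ (n + 1))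
      (Fintype.piFinset fun _ => ({n, n + 1} : Finset ℕ))
    rw [← levelTuples_add_two, levelTuples_inter_piFinset, Finset.card_singleton, ih,
      htop] at hunion
    have := Nat.one_le_two_pow (n := Fintype.card κ)
    change (levelTuples κ (n + 2)).card = _
    rw [Nat.mul_succ]
    omega

/-- The set that contains, for every colour `k`, the vertex of colour `k` in level `x k`. -/
def transversal {β : Type*} (x : κ → β) : Finset (β × κ) :=
  Finset.univ.map ⟨fun k => (x k, k), fun _ _ h => (Prod.ext_iff.mp h).2⟩

lemma mem_transversal {β : Type*} {x : κ → β} {p : β × κ} : p ∈ transversal x ↔ x p.2 = p.1 := by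
  simp only [transversal, Finset.mem_map, Finset.mem_univ, true_and]
  exact ⟨fun ⟨k, hk⟩ => hk ▸ rfl, fun h => ⟨p.2, Prod.ext h rfl⟩⟩

lemma transversal_injective {β : Type*} :
    Function.Injective (transversal : (κ → β) → Finset (β × κ)) := fun x y h => funext fun k =>
  (mem_transversal.mp (h ▸ mem_transversal.mpr rfl : (x k, k) ∈ transversal y)).symm

lemma tube_colorable (n : ℕ) : (tube n).Colorable 3 :=
  ⟨Coloring.mk Prod.snd fun h => h.1⟩

lemma injOn_snd_of_isClique_tube {n : ℕ} {s : Set (Fin n × Fin 3)} (hs : (tube n).IsClique s) :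
    s.InjOn Prod.snd := fun p hp q hq hpq => by
  by_contra hne
  exact (hs hp hq hne).1 hpq

lemma cliqueSet_tube_three (n : ℕ) :
    (tube n).cliqueSet 3 = transversal '' {x | ∀ k l, (x k).1 ≤ (x l).1 + 1} := by
  ext s
  rw [mem_cliqueSet_iff, isNClique_iff]
  constructor
  · rintro ⟨hs, hcard⟩
    have hinj := injOn_snd_of_isClique_tube hs
    have hcolours : s.image Prod.snd = Finset.univ := by
      rw [← Finset.card_eq_iff_eq_univ, Finset.card_image_of_injOn hinj, hcard, Fintype.card_fin]
    have hex : ∀ k, ∃ i, (i, k) ∈ s := fun k => by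
      obtain ⟨⟨i, _⟩, hi, rfl⟩ := Finset.mem_image.mp (hcolours ▸ Finset.mem_univ k)
      exact ⟨i, hi⟩
    choose x hx using hex
    refine ⟨x, fun k l => ?_, Finset.eq_of_subset_of_card_le ?_ ?_⟩
    · rcases eq_or_ne k l with rfl | hkl
      · exact Nat.le_succ _
      · exact (hs (hx k) (hx l) fun h => hkl (Prod.ext_iff.mp h).2).2.1
    · intro p hp
      have hxp : (x p.2, p.2) = p := Prod.ext (mem_transversal.mp hp) rfl
      exact hxp ▸ hx p.2
    · rw [hcard, transversal, Finset.card_map, Finset.card_fin]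
  · rintro ⟨x, hx, rfl⟩
    refine ⟨?_, by rw [transversal, Finset.card_map, Finset.card_fin]⟩
    rintro ⟨i, k⟩ hp ⟨j, l⟩ hq hpq
    obtain rfl : x k = i := mem_transversal.mp hp
    obtain rfl : x l = j := mem_transversal.mp hq
    exact ⟨fun hkl : k = l => hpq (hkl ▸ rfl), hx k l, hx l k⟩

lemma ncard_cliqueSet_tube_three (n : ℕ) : ((tube (n + 1)).cliqueSet 3).ncard = 7 * n + 1 := by
  have himage : (fun x => Fin.val ∘ x) '' {x : Fin 3 → Fin (n + 1) | ∀ k l, (x k).1 ≤ (x l).1 + 1} =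
      levelTuples (Fin 3) (n + 1) := by
    ext y
    rw [Finset.mem_coe, mem_levelTuples]
    constructor
    · rintro ⟨x, hx, rfl⟩
      exact ⟨fun k => (x k).2, hx⟩
    · exact fun ⟨hlt, hy⟩ => ⟨fun k => ⟨y k, hlt k⟩, hy, rfl⟩
  rw [cliqueSet_tube_three, Set.ncard_image_of_injective _ transversal_injective,
    ← Set.ncard_image_of_injective _ (Fin.val_injective.comp_left), himage, Set.ncard_coe_finset,
    card_levelTuples, Fintype.card_fin]
  norm_num

end Triangles

theorem stmt15_general (n : ℕ) (hn : 1 ≤ n) :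
    ∃ (V : Type) (G : SimpleGraph V),
      Nat.card V = 3 * n ∧
      Planar G ∧
      (∀ s : Finset V, G.IsClique ↑s → s.card ≤ 3) ∧
      {s : Finset V | s.card = 3 ∧ G.IsClique ↑s}.ncard = 7 * n - 6 ∧
      ∀ (ι : Type u) [Finite ι] (X : ι → Finset V),
        (∀ s : Finset V, G.IsNClique 3 s → ∃ i, s ⊆ X i) →
        (∀ i, (X i).card ≤ 4) →
        (7 / 6 : ℝ) * (Nat.card V : ℝ) - 3 ≤ (Nat.card ι : ℝ) := by
  obtain ⟨m, rfl⟩ := Nat.exists_eq_add_of_le' hn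
  have hV : Nat.card (Fin (m + 1) × Fin 3) = 3 * (m + 1) := by simp [mul_comm]
  refine ⟨_, tube (m + 1), hV, tube_planar m,
    fun s hs => hs.card_le_of_colorable (tube_colorable _), ?_, fun ι _ X hcover hX => ?_⟩
  · rw [show 7 * (m + 1) - 6 = 7 * m + 1 by omega, ← ncard_cliqueSet_tube_three]
    simp only [cliqueSet, isNClique_iff, and_comm]
  · have hle := ncard_cliqueSet_le_two_mul_card ((tube_colorable _).cliqueFree (Nat.lt_succ_self 3))
      hcover hX
    rw [ncard_cliqueSet_tube_three] at hle
    have : (7 * m + 1 : ℝ) ≤ 2 * Nat.card ι := mod_cast hle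
    rw [hV]
    push_cast
    linarith

/-- For every `n ≥ 1` there is a planar graph `Gₙ` with `3n` vertices, `7n − 6`
triangles, and no `K₄` subgraph, such that every strong ω-decomposition of `Gₙ` of
width 4 has order at least `(7/6)|V(Gₙ)| − 3`. -/
theorem stmt15 (n : ℕ) (hn : 1 ≤ n) :
    ∃ (V : Type) (G : SimpleGraph V),
      Nat.card V = 3 * n ∧
      Planar G ∧
      (∀ s : Finset V, G.IsClique ↑s → s.card ≤ 3) ∧
      {s : Finset V | s.card = 3 ∧ G.IsClique ↑s}.ncard = 7 * n - 6 ∧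
      ∀ (ι : Type u) [Finite ι] (D : SimpleGraph ι) (X : ι → Finset V),
        IsStrongDecomposition G D X →
        (∀ s : Finset V, G.IsClique ↑s → ∃ i, s ⊆ X i) →
        (∀ i, (X i).card ≤ 4) →
        (7 / 6 : ℝ) * (Nat.card V : ℝ) - 3 ≤ (Nat.card ι : ℝ) := by
  obtain ⟨V, G, hV, hplanar, hclique, htri, horder⟩ := stmt15_general n hn
  exact ⟨V, G, hV, hplanar, hclique, htri, fun ι _ _ X _ hω hX =>
    horder ι X (fun s hs => hω s hs.isClique) hX⟩
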